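/- Under the parameter setting κ = 𝟙 := (1,…,1) ∈ ℝ^N, the feasible regions of the Linear Approximation, the Strengthened Linear Approximation, and the Strengthened and Faster Linear Approximation coincide: X_LA(𝟙) = X_SLA(𝟙) = X_SFLA(𝟙). -/

import Mathlib

/-!
Given a feasible pair `(s, r)` of the Linear Approximation, put `t i = s - r i` and replace `s` by
the `(k+1)`-th smallest value `s'` of `t`, and `r i` by the shortfall `(s' - t i)⁺`. At least
`k + 1` of the `t i` are at most `s'`, so the total shortfall drops by at least
`(k + 1) * (s - s')`, which pays for the loss `ε * N * (s - s')` in the budget. As the values of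
each constraint dominate `t`, their `(k+1)`-th smallest one dominates `s'`, and this is the quantile
constraint of the Strengthened Linear Approximation. Conversely, under the quantile constraint,
every sample whose score is at least the quantile satisfies its constraint already with `r i = 0`.
-/

open Finset

/-- The order statistic of a finite sequence: `orderStat v k` is the value of rank `k` of `v`,
counted with multiplicity. Ranks start from `0`, so this is the `(k+1)`-th smallest value. -/
def orderStat {α : Type*} [LinearOrder α] {N : ℕ} (v : Fin N → α) (k : Fin N) : α :=
  (v ∘ Tuple.sort v) k

/-- The constraints of the linear approximations on the level `s` and the slacks `r` alone, with the
risk level and the Wasserstein radius scaled by the sample size: `β` is `εN` and `τ` is `θN`. -/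
def IsBudgeted {ι : Type*} [Fintype ι] (β τ s : ℝ) (r : ι → ℝ) : Prop :=
  0 ≤ s ∧ (∀ i, 0 ≤ r i) ∧ τ ≤ β * s - ∑ i, r i

section Regions

variable {N : ℕ} {ι Ω : Type*} (X : Set Ω) (φ : ι → Ω → ℝ → ℝ) (v : ι → Fin N → ℝ) (k : Fin N)
  (β τ : ℝ) (κ : Fin N → ℝ)

/-- The feasible region `X_LA(κ)` of the Linear Approximation. Sample `i` has score `v p i` for
constraint `p`, and `φ p x` maps scores to the normalized constraint values at the decision `x`; in
the paper `v p i = b_p^⊤ ξ_i` and `φ p x t = (t + d_p - a_p^⊤ x) / ‖b_p‖_*`. -/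
def linearApprox : Set Ω :=
  {x | x ∈ X ∧ ∃ s r, IsBudgeted β τ s r ∧ ∀ i p, s - r i ≤ κ i * φ p x (v p i)}

/-- The feasible region `X_SLA(κ)` of the Strengthened Linear Approximation: the quantile
`q_p = orderStat (v p) k` must have value at least `s` for every `p`. -/
def strengthenedLinearApprox : Set Ω :=
  {x | x ∈ X ∧ ∃ s r, IsBudgeted β τ s r ∧ (∀ i p, s - r i ≤ κ i * φ p x (v p i)) ∧
    ∀ p, s ≤ φ p x (orderStat (v p) k)}

/-- The feasible region `X_SFLA(κ)` of the Strengthened and Faster Linear Approximation: the sample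
constraints are imposed only on the index set `[N]_p` of scores strictly below the quantile. -/
def strengthenedFasterLinearApprox : Set Ω :=
  {x | x ∈ X ∧ ∃ s r, IsBudgeted β τ s r ∧
    (∀ p i, v p i < orderStat (v p) k → s - r i ≤ κ i * φ p x (v p i)) ∧
    ∀ p, s ≤ φ p x (orderStat (v p) k)}

end Regions

section OrderStat

variable {α γ : Type*} [LinearOrder α] [LinearOrder γ] {N : ℕ} (k : Fin N)

theorem orderStat_le_iff {v : Fin N → α} {a : α} :
    orderStat v k ≤ a ↔ (k : ℕ) < #{i | v i ≤ a} := by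
  have card_sorted : #{i | (v ∘ Tuple.sort v) i ≤ a} = #{i | v i ≤ a} :=
    card_equiv (Tuple.sort v) (by simp)
  rw [← card_sorted]
  exact (Tuple.lt_card_le_iff_apply_le_of_monotone (Tuple.monotone_sort v)).symm

theorem orderStat_mono {v w : Fin N → α} (hvw : ∀ i, v i ≤ w i) :
    orderStat v k ≤ orderStat w k :=
  (orderStat_le_iff k).2 <| ((orderStat_le_iff k).1 le_rfl).trans_le <|
    card_le_card <| monotone_filter_right _ fun i _ hi => (hvw i).trans hi

theorem map_orderStat_of_monotone {φ : α → γ} (hφ : Monotone φ) (v : Fin N → α) :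
    φ (orderStat v k) = orderStat (φ ∘ v) k :=
  have sorted : Monotone ((φ ∘ v) ∘ Tuple.sort v) := hφ.comp (Tuple.monotone_sort v)
  congr_fun (Tuple.comp_sort_eq_comp_iff_monotone.2 sorted) k

end OrderStat

theorem sum_posPart_sub_add_card_mul_le {ι : Type*} [Fintype ι] (t : ι → ℝ) {a b : ℝ}
    (hab : a ≤ b) :
    ∑ i, (a - t i)⁺ + #{i | t i ≤ a} * (b - a) ≤ ∑ i, (b - t i)⁺ := by
  have card_mul_eq : #{i | t i ≤ a} * (b - a) = ∑ i, if t i ≤ a then b - a else 0 := by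
    rw [← sum_filter, sum_const, nsmul_eq_mul]
  rw [card_mul_eq, ← sum_add_distrib]
  refine sum_le_sum fun i _ => ?_
  split_ifs with hi
  · rw [posPart_of_nonneg (sub_nonneg.2 hi), posPart_of_nonneg (sub_nonneg.2 (hi.trans hab))]
    linarith
  · rw [add_zero]
    exact posPart_mono (sub_le_sub_right hab _)

theorem IsBudgeted.orderStat_level {N : ℕ} {β τ s : ℝ} {r : Fin N → ℝ} (h : IsBudgeted β τ s r)
    (hβ : 0 < β) (hτ : 0 ≤ τ) {k : Fin N} (hβk : β ≤ k + 1) :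
    IsBudgeted β τ (orderStat (fun i => s - r i) k)
      (fun i => (orderStat (fun i => s - r i) k - (s - r i))⁺) := by
  obtain ⟨-, hr, hbudget⟩ := h
  set t : Fin N → ℝ := fun i => s - r i
  set s' := orderStat t k
  have level_le : s' ≤ s := sub_le_self s (hr _)
  have le_card : β ≤ #{i | t i ≤ s'} :=
    hβk.trans (mod_cast (orderStat_le_iff k).1 le_rfl)
  have shortfall_eq : ∀ i, (s - t i)⁺ = r i := fun i => by
    rw [sub_sub_cancel, posPart_of_nonneg (hr i)]
  have shortfall_drop : ∑ i, (s' - t i)⁺ + β * (s - s') ≤ ∑ i, r i :=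
    calc ∑ i, (s' - t i)⁺ + β * (s - s')
        ≤ ∑ i, (s' - t i)⁺ + #{i | t i ≤ s'} * (s - s') := by gcongr
      _ ≤ ∑ i, (s - t i)⁺ := sum_posPart_sub_add_card_mul_le t level_le
      _ = ∑ i, r i := sum_congr rfl fun i _ => shortfall_eq i
  have budget : τ ≤ β * s' - ∑ i, (s' - t i)⁺ := by linarith
  have shortfall_nonneg : 0 ≤ ∑ i, (s' - t i)⁺ := sum_nonneg fun i _ => posPart_nonneg _
  exact ⟨nonneg_of_mul_nonneg_right (by linarith) hβ, fun i => posPart_nonneg _, budget⟩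

section Inclusions

variable {N : ℕ} {ι Ω : Type*} {X : Set Ω} {φ : ι → Ω → ℝ → ℝ} {v : ι → Fin N → ℝ} {k : Fin N}
  {β τ : ℝ}

theorem strengthenedLinearApprox_subset_linearApprox {κ : Fin N → ℝ} :
    strengthenedLinearApprox X φ v k β τ κ ⊆ linearApprox X φ v β τ κ :=
  fun _ ⟨hx, s, r, hsr, hsample, _⟩ => ⟨hx, s, r, hsr, hsample⟩

theorem strengthenedLinearApprox_subset_strengthenedFasterLinearApprox {κ : Fin N → ℝ} :
    strengthenedLinearApprox X φ v k β τ κ ⊆ strengthenedFasterLinearApprox X φ v k β τ κ :=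
  fun _ ⟨hx, s, r, hsr, hsample, hquantile⟩ =>
    ⟨hx, s, r, hsr, fun p i _ => hsample i p, hquantile⟩

theorem linearApprox_one_subset_strengthenedLinearApprox
    (hφ : ∀ p, ∀ x ∈ X, Monotone (φ p x)) (hβ : 0 < β) (hβk : β ≤ k + 1) (hτ : 0 ≤ τ) :
    linearApprox X φ v β τ 1 ⊆ strengthenedLinearApprox X φ v k β τ 1 := by
  rintro x ⟨hx, s, r, hsr, hsample⟩
  simp only [Pi.one_apply, one_mul] at hsample
  refine ⟨hx, _, _, hsr.orderStat_level hβ hτ hβk, fun i p => ?_, fun p => ?_⟩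
  · rw [Pi.one_apply, one_mul]
    exact (sub_le_comm.1 (le_posPart _)).trans (hsample i p)
  · rw [map_orderStat_of_monotone k (hφ p x hx)]
    exact orderStat_mono k fun i => hsample i p

theorem strengthenedFasterLinearApprox_subset_strengthenedLinearApprox
    (hφ : ∀ p, ∀ x ∈ X, Monotone (φ p x)) {κ : Fin N → ℝ} (hκ : ∀ i, 1 ≤ κ i) :
    strengthenedFasterLinearApprox X φ v k β τ κ ⊆ strengthenedLinearApprox X φ v k β τ κ := by
  rintro x ⟨hx, s, r, ⟨hs, hr, hbudget⟩, hsample, hquantile⟩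
  refine ⟨hx, s, r, ⟨hs, hr, hbudget⟩, fun i p => ?_, hquantile⟩
  obtain below | above := lt_or_ge (v p i) (orderStat (v p) k)
  · exact hsample p i below
  · have level_le : s ≤ φ p x (v p i) := (hquantile p).trans (hφ p x hx above)
    calc s - r i ≤ s := sub_le_self s (hr i)
      _ ≤ φ p x (v p i) := level_le
      _ ≤ κ i * φ p x (v p i) := le_mul_of_one_le_left (hs.trans level_le) (hκ i)

theorem stmt_4_general (hφ : ∀ p, ∀ x ∈ X, Monotone (φ p x)) (hβ : 0 < β) (hβk : β ≤ k + 1)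
    (hτ : 0 ≤ τ) :
    linearApprox X φ v β τ 1 = strengthenedLinearApprox X φ v k β τ 1 ∧
      strengthenedLinearApprox X φ v k β τ 1 = strengthenedFasterLinearApprox X φ v k β τ 1 :=
  ⟨(linearApprox_one_subset_strengthenedLinearApprox hφ hβ hβk hτ).antisymm
      strengthenedLinearApprox_subset_linearApprox,
    strengthenedLinearApprox_subset_strengthenedFasterLinearApprox.antisymm
      (strengthenedFasterLinearApprox_subset_strengthenedLinearApprox hφ fun _ => le_rfl)⟩

end Inclusions

theorem stmt_4
    (N K L P : ℕ) (hN : 0 < N) (hK : 0 < K) (hL : 0 < L) (hP : 0 < P)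
    (nrm : (Fin K → ℝ) → ℝ)
    (nrm_eq_zero : ∀ u : Fin K → ℝ, nrm u = 0 ↔ u = 0)
    (nrm_smul : ∀ (c : ℝ) (u : Fin K → ℝ), nrm (c • u) = |c| * nrm u)
    (nrm_triangle : ∀ u w : Fin K → ℝ, nrm (u + w) ≤ nrm u + nrm w)
    (dstar : (Fin K → ℝ) → ℝ)
    (hdstar : ∀ v : Fin K → ℝ,
      dstar v = sSup ((fun u : Fin K → ℝ => ∑ j, v j * u j) '' {u | nrm u ≤ 1}))
    (ξ : Fin N → Fin K → ℝ)
    (a : Fin P → Fin L → ℝ) (b : Fin P → Fin K → ℝ) (hb : ∀ p, b p ≠ 0)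
    (d : Fin P → ℝ)
    (ε θ : ℝ) (hε0 : 0 < ε) (hε1 : ε < 1) (hθ : 0 < θ)
    (k : ℕ) (hk : k = ⌊ε * (N : ℝ)⌋₊) (hkN : k < N)
    (X : Set (Fin L → ℝ))
    (f : Fin N → Fin P → (Fin L → ℝ) → ℝ)
    (hf : ∀ i p x, f i p x =
      ((∑ j, b p j * ξ i j) + d p - ∑ j, a p j * x j) / dstar (b p))
    (q : Fin P → ℝ)
    (hq : ∀ p, q p =
      ((fun i => ∑ j, b p j * ξ i j) ∘ Tuple.sort (fun i => ∑ j, b p j * ξ i j)) ⟨k, hkN⟩)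
    (XLA : (Fin N → ℝ) → Set (Fin L → ℝ))
    (hXLA : ∀ κ : Fin N → ℝ, XLA κ = {x | x ∈ X ∧ ∃ s : ℝ, ∃ r : Fin N → ℝ,
      0 ≤ s ∧ (∀ i, 0 ≤ r i) ∧
      ε * (N : ℝ) * s - ∑ i, r i ≥ θ * (N : ℝ) ∧
      ∀ i p, κ i * f i p x ≥ s - r i})
    (XSLA : (Fin N → ℝ) → Set (Fin L → ℝ))
    (hXSLA : ∀ κ : Fin N → ℝ, XSLA κ = {x | x ∈ X ∧ ∃ s : ℝ, ∃ r : Fin N → ℝ,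
      0 ≤ s ∧ (∀ i, 0 ≤ r i) ∧
      ε * (N : ℝ) * s - ∑ i, r i ≥ θ * (N : ℝ) ∧
      (∀ i p, κ i * f i p x ≥ s - r i) ∧
      ∀ p, (q p + d p - ∑ j, a p j * x j) / dstar (b p) ≥ s})
    (XSFLA : (Fin N → ℝ) → Set (Fin L → ℝ))
    (hXSFLA : ∀ κ : Fin N → ℝ, XSFLA κ = {x | x ∈ X ∧ ∃ s : ℝ, ∃ r : Fin N → ℝ,
      0 ≤ s ∧ (∀ i, 0 ≤ r i) ∧
      ε * (N : ℝ) * s - ∑ i, r i ≥ θ * (N : ℝ) ∧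
      (∀ p, ∀ i, (∑ j, b p j * ξ i j) < q p → κ i * f i p x ≥ s - r i) ∧
      ∀ p, (q p + d p - ∑ j, a p j * x j) / dstar (b p) ≥ s})
    :
    XLA (fun _ => 1) = XSLA (fun _ => 1) ∧ XSLA (fun _ => 1) = XSFLA (fun _ => 1) := by
  have dstar_nonneg : ∀ u, 0 ≤ dstar u := fun u => by
    rw [hdstar]
    exact Real.sSup_nonneg' ⟨0, ⟨0, by simp [(nrm_eq_zero 0).2 rfl], by simp⟩, le_rfl⟩
  have regions_eq := stmt_4_general (X := X) (k := ⟨k, hkN⟩) (v := fun p i => ∑ j, b p j * ξ i j)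
    (φ := fun p x t => (t + d p - ∑ j, a p j * x j) / dstar (b p)) (β := ε * N) (τ := θ * N)
    (fun p _ _ _ _ h => div_le_div_of_nonneg_right (by linarith) (dstar_nonneg (b p)))
    (by positivity) (hk ▸ (Nat.lt_floor_add_one _).le) (by positivity)
  simpa only [linearApprox, strengthenedLinearApprox, strengthenedFasterLinearApprox, IsBudgeted,
    orderStat, ← hq, ← hf, and_assoc, Pi.one_apply, hXLA, hXSLA, hXSFLA, ge_iff_le] using regions_eq
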